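/- arXiv:1007.3313 — 2 statements merged into one kernel-verified Lean document; each statement's English description precedes it below -/
import Mathlib

section
/- Let E be a real inner product space and F : E → E a continuous linear map that is skew-adjoint, i.e. ⟨F x, y⟩ = -⟨x, F y⟩ for all x, y ∈ E, and suppose ‖F x‖ ≤ M ‖x‖ for all x ∈ E, where M > 0. Let p ≥ 1 be an integer, set β_j = 1/j! for 0 ≤ j ≤ 2p and β_j = 0 for j > 2p, let S_q = Σ_{j=0}^{2q} (-1)^{q+j} β_j β_{2q-j}, and set K = Σ_{q=p+1}^{2p} |S_q|. Then for any C > 0 and any time step δt > 0 satisfying δt·M ≤ 1 and δt^{2p+1} M^{2p+2} ≤ 2C/K, one has for every θ ∈ E: ‖Σ_{ℓ=0}^{2p} (δt^ℓ/ℓ!) F^ℓ θ‖ ≤ (1 + C·δt) ‖θ‖. (This makes precise the statement that an order-2p scheme applied to a transport problem is stable at worst under the CFL-like condition δt ≤ C' (δx/a)^{(2p+2)/(2p+1)}, with M playing the role of a/δx.) -/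
open RealInnerProductSpace Finset

/-!
For a skew-adjoint operator `A`, the pairing `⟪A ^ i θ, A ^ j θ⟫` vanishes when `i + j` is odd and
equals `(-1) ^ (q + i) * ‖A ^ q θ‖ ^ 2` when `i + j = 2 * q`. Expanding the square therefore gives
`‖∑ ℓ, β ℓ • A ^ ℓ θ‖ ^ 2 = ∑ q, S q * ‖A ^ q θ‖ ^ 2`. If `β` agrees with the exponential series up
to degree `2 * p`, then `exp z * exp (-z) = 1` gives `S 0 = 1` and `S q = 0` for `1 ≤ q ≤ p`. With
`A = δt • F`, the remaining terms amount to at most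
`K * (δt * M) ^ (2 * p + 2) * ‖θ‖ ^ 2 ≤ 2 * C * δt * ‖θ‖ ^ 2`, and
`1 + 2 * C * δt ≤ (1 + C * δt) ^ 2`.
-/

section Sums

variable {G : Type*} [AddCommMonoid G]

theorem sum_range_two_mul_add_one_of_odd_eq_zero {f : ℕ → G} (hf : ∀ n, Odd n → f n = 0) (s : ℕ) :
    ∑ n ∈ range (2 * s + 1), f n = ∑ q ∈ range (s + 1), f (2 * q) := by
  induction s with
  | zero => simp
  | succ s ih =>
    rw [mul_add_one, sum_range_succ, sum_range_succ, ih, hf _ (odd_two_mul_add_one s), add_zero,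
      sum_range_succ _ (s + 1), mul_add_one]

theorem sum_range_sum_range_eq_sum_antidiagonals {f : ℕ → ℕ → G} {s : ℕ}
    (hf : ∀ i j, s < i ∨ s < j → f i j = 0) :
    ∑ i ∈ range (s + 1), ∑ j ∈ range (s + 1), f i j =
      ∑ n ∈ range (2 * s + 1), ∑ i ∈ range (n + 1), f i (n - i) := by
  rw [sum_range_diag_flip]
  calc ∑ i ∈ range (s + 1), ∑ j ∈ range (s + 1), f i j
      = ∑ i ∈ range (s + 1), ∑ j ∈ range (2 * s + 1 - i), f i j :=
        sum_congr rfl fun i hi ↦ sum_subset (by grind) fun j _ hj ↦ hf i j (by grind)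
    _ = ∑ i ∈ range (2 * s + 1), ∑ j ∈ range (2 * s + 1 - i), f i j :=
        sum_subset (by grind) fun i _ hi ↦ sum_eq_zero fun j _ ↦ hf i j (by grind)

end Sums

/-- The stability coefficient `S_q` of a one-step scheme with coefficients `β`: if
`P(z) = ∑ β_j z ^ j`, then `P(z) P(-z) = ∑ (-1) ^ q S_q z ^ (2 q)`. -/
def stabilityCoeff (β : ℕ → ℝ) (q : ℕ) : ℝ :=
  ∑ j ∈ range (2 * q + 1), (-1 : ℝ) ^ (q + j) * β j * β (2 * q - j)

theorem stabilityCoeff_zero (β : ℕ → ℝ) : stabilityCoeff β 0 = β 0 ^ 2 := by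
  simp [stabilityCoeff, sq]

theorem sum_range_neg_one_pow_div_factorial_mul_factorial {n : ℕ} (hn : n ≠ 0) :
    ∑ j ∈ range (n + 1), (-1 : ℝ) ^ j * (1 / (j.factorial : ℝ)) * (1 / ((n - j).factorial : ℝ)) =
      0 := by
  have h := congrArg (PowerSeries.coeff n) (PowerSeries.exp_mul_exp_neg_eq_one (A := ℝ))
  rw [mul_comm, PowerSeries.coeff_mul, Nat.sum_antidiagonal_eq_sum_range_succ_mk,
    PowerSeries.coeff_one, if_neg hn] at h
  simpa [PowerSeries.evalNegHom, PowerSeries.coeff_exp] using h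

theorem stabilityCoeff_eq_zero_of_eq_inv_factorial {β : ℕ → ℝ} {q : ℕ} (hq : q ≠ 0)
    (hβ : ∀ j, j ≤ 2 * q → β j = 1 / (j.factorial : ℝ)) : stabilityCoeff β q = 0 := by
  calc stabilityCoeff β q
      = (-1 : ℝ) ^ q * ∑ j ∈ range (2 * q + 1),
          (-1 : ℝ) ^ j * (1 / (j.factorial : ℝ)) * (1 / ((2 * q - j).factorial : ℝ)) := by
        rw [stabilityCoeff, mul_sum]
        refine sum_congr rfl fun j hj ↦ ?_
        rw [hβ j (by grind), hβ (2 * q - j) (by grind), pow_add]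
        ring
    _ = 0 := by
        rw [sum_range_neg_one_pow_div_factorial_mul_factorial (mul_ne_zero two_ne_zero hq),
          mul_zero]

theorem norm_pow_apply_le {R E : Type*} [Semiring R] [SeminormedAddCommGroup E] [Module R E]
    {A : E →ₗ[R] E} {μ : ℝ} (hμ : 0 ≤ μ) (hA : ∀ x, ‖A x‖ ≤ μ * ‖x‖) (n : ℕ) (x : E) :
    ‖(A ^ n) x‖ ≤ μ ^ n * ‖x‖ := by
  induction n with
  | zero => simp
  | succ n ih =>
    calc ‖(A ^ (n + 1)) x‖ = ‖A ((A ^ n) x)‖ := by rw [pow_succ', Module.End.mul_apply]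
      _ ≤ μ * (μ ^ n * ‖x‖) := (hA _).trans (by gcongr)
      _ = μ ^ (n + 1) * ‖x‖ := by ring

section SkewAdjoint

variable {E : Type*} [SeminormedAddCommGroup E] [InnerProductSpace ℝ E] {A : E →ₗ[ℝ] E}

theorem inner_pow_apply_left (hA : ∀ x y, ⟪A x, y⟫ = -⟪x, A y⟫) (n : ℕ) (x y : E) :
    ⟪(A ^ n) x, y⟫ = (-1) ^ n * ⟪x, (A ^ n) y⟫ := by
  induction n generalizing y with
  | zero => simp
  | succ n ih =>
    calc ⟪(A ^ (n + 1)) x, y⟫ = -⟪(A ^ n) x, A y⟫ := by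
          rw [pow_succ', Module.End.mul_apply, hA]
      _ = (-1) ^ (n + 1) * ⟪x, (A ^ (n + 1)) y⟫ := by
          rw [ih, pow_succ A, Module.End.mul_apply, pow_succ]
          ring

theorem inner_pow_apply_pow_apply (hA : ∀ x y, ⟪A x, y⟫ = -⟪x, A y⟫) (i j : ℕ) (x : E) :
    ⟪(A ^ i) x, (A ^ j) x⟫ = (-1) ^ i * ⟪x, (A ^ (i + j)) x⟫ := by
  rw [inner_pow_apply_left hA, pow_add, Module.End.mul_apply]

theorem inner_pow_apply_pow_apply_of_odd (hA : ∀ x y, ⟪A x, y⟫ = -⟪x, A y⟫) {i j : ℕ}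
    (hij : Odd (i + j)) (x : E) : ⟪(A ^ i) x, (A ^ j) x⟫ = 0 := by
  have h := inner_pow_apply_left hA (i + j) x x
  rw [real_inner_comm, hij.neg_one_pow, neg_one_mul] at h
  rw [inner_pow_apply_pow_apply hA, self_eq_neg.mp h, mul_zero]

theorem inner_pow_apply_pow_apply_of_add_eq_two_mul (hA : ∀ x y, ⟪A x, y⟫ = -⟪x, A y⟫)
    {i j q : ℕ} (hij : i + j = 2 * q) (x : E) :
    ⟪(A ^ i) x, (A ^ j) x⟫ = (-1) ^ (q + i) * ‖(A ^ q) x‖ ^ 2 := by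
  have hq : ‖(A ^ q) x‖ ^ 2 = (-1) ^ q * ⟪x, (A ^ (2 * q)) x⟫ := by
    rw [← real_inner_self_eq_norm_sq, inner_pow_apply_pow_apply hA, two_mul]
  calc ⟪(A ^ i) x, (A ^ j) x⟫ = (-1) ^ i * ⟪x, (A ^ (2 * q)) x⟫ := by
        rw [inner_pow_apply_pow_apply hA, hij]
    _ = (-1) ^ (q + i) * ‖(A ^ q) x‖ ^ 2 := by
        rw [hq, ← mul_assoc, ← pow_add, add_right_comm, pow_add, Even.neg_one_pow ⟨q, rfl⟩,
          one_mul]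

theorem norm_sq_sum_smul_pow_apply (hA : ∀ x y, ⟪A x, y⟫ = -⟪x, A y⟫) {β : ℕ → ℝ} {s : ℕ}
    (hβ : ∀ j, s < j → β j = 0) (x : E) :
    ‖∑ ℓ ∈ range (s + 1), β ℓ • (A ^ ℓ) x‖ ^ 2 =
      ∑ q ∈ range (s + 1), stabilityCoeff β q * ‖(A ^ q) x‖ ^ 2 := by
  let f (i j : ℕ) : ℝ := β i * β j * ⟪(A ^ i) x, (A ^ j) x⟫
  have hf : ∀ i j, s < i ∨ s < j → f i j = 0 := by
    rintro i j (hi | hj)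
    · simp [f, hβ i hi]
    · simp [f, hβ j hj]
  have hodd : ∀ n, Odd n → ∑ i ∈ range (n + 1), f i (n - i) = 0 := fun n hn ↦
    sum_eq_zero fun i hi ↦ mul_eq_zero_of_right _ <|
      inner_pow_apply_pow_apply_of_odd hA (by rwa [Nat.add_sub_cancel' (by grind)]) x
  have heven (q : ℕ) :
      ∑ i ∈ range (2 * q + 1), f i (2 * q - i) = stabilityCoeff β q * ‖(A ^ q) x‖ ^ 2 := by
    rw [stabilityCoeff, sum_mul]
    refine sum_congr rfl fun i hi ↦ ?_
    have hi : i + (2 * q - i) = 2 * q := Nat.add_sub_cancel' (by grind)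
    simp only [f, inner_pow_apply_pow_apply_of_add_eq_two_mul hA hi]
    ring
  calc ‖∑ ℓ ∈ range (s + 1), β ℓ • (A ^ ℓ) x‖ ^ 2
      = ∑ i ∈ range (s + 1), ∑ j ∈ range (s + 1), f i j := by
        rw [← real_inner_self_eq_norm_sq, sum_inner]
        simp only [inner_sum, real_inner_smul_left, real_inner_smul_right, f, mul_assoc,
          mul_left_comm]
    _ = ∑ n ∈ range (2 * s + 1), ∑ i ∈ range (n + 1), f i (n - i) :=
        sum_range_sum_range_eq_sum_antidiagonals hf
    _ = ∑ q ∈ range (s + 1), stabilityCoeff β q * ‖(A ^ q) x‖ ^ 2 := by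
        rw [sum_range_two_mul_add_one_of_odd_eq_zero hodd]
        exact sum_congr rfl fun q _ ↦ heven q

theorem norm_sq_sum_smul_pow_apply_le (hA : ∀ x y, ⟪A x, y⟫ = -⟪x, A y⟫) {μ : ℝ} (hμ : 0 ≤ μ)
    (hμ1 : μ ≤ 1) (hAμ : ∀ x, ‖A x‖ ≤ μ * ‖x‖) {β : ℕ → ℝ} {p s : ℕ}
    (hβ : ∀ j, s < j → β j = 0) (hS0 : stabilityCoeff β 0 = 1)
    (hS : ∀ q, q ≠ 0 → q ≤ p → stabilityCoeff β q = 0) (x : E) :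
    ‖∑ ℓ ∈ range (s + 1), β ℓ • (A ^ ℓ) x‖ ^ 2 ≤
      (1 + μ ^ (2 * p + 2) * ∑ q ∈ Icc (p + 1) s, |stabilityCoeff β q|) * ‖x‖ ^ 2 := by
  let a (q : ℕ) : ℝ := stabilityCoeff β q * ‖(A ^ q) x‖ ^ 2
  have hlow : ∑ q ∈ range (s + 1), a q = ‖x‖ ^ 2 + ∑ q ∈ Icc (p + 1) s, a q := by
    have hsupp : ∑ q ∈ insert 0 (Icc (p + 1) s), a q = ∑ q ∈ range (s + 1), a q :=
      sum_subset (by grind) fun q _ hq ↦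
        mul_eq_zero_of_left (hS q (by grind) (by grind)) _
    rw [← hsupp, sum_insert (by simp)]
    simp [a, hS0]
  have htail : ∀ q ∈ Icc (p + 1) s, a q ≤ |stabilityCoeff β q| * (μ ^ (2 * p + 2) * ‖x‖ ^ 2) := by
    intro q hq
    have hpow : ‖(A ^ q) x‖ ^ 2 ≤ μ ^ (2 * p + 2) * ‖x‖ ^ 2 := calc
      ‖(A ^ q) x‖ ^ 2 ≤ (μ ^ q * ‖x‖) ^ 2 := by
        gcongr
        exact norm_pow_apply_le hμ hAμ q x
      _ = μ ^ (2 * q) * ‖x‖ ^ 2 := by ring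
      _ ≤ μ ^ (2 * p + 2) * ‖x‖ ^ 2 := by
        gcongr ?_ * _
        exact pow_le_pow_of_le_one hμ hμ1 (by grind)
    exact mul_le_mul (le_abs_self _) hpow (sq_nonneg _) (abs_nonneg _)
  calc ‖∑ ℓ ∈ range (s + 1), β ℓ • (A ^ ℓ) x‖ ^ 2
      = ‖x‖ ^ 2 + ∑ q ∈ Icc (p + 1) s, a q := by rw [norm_sq_sum_smul_pow_apply hA hβ, hlow]
    _ ≤ ‖x‖ ^ 2 + ∑ q ∈ Icc (p + 1) s, |stabilityCoeff β q| * (μ ^ (2 * p + 2) * ‖x‖ ^ 2) := by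
        gcongr with q hq
        exact htail q hq
    _ = (1 + μ ^ (2 * p + 2) * ∑ q ∈ Icc (p + 1) s, |stabilityCoeff β q|) * ‖x‖ ^ 2 := by
        rw [← sum_mul]
        ring

end SkewAdjoint

theorem order_2p_scheme_stability_general
    {E : Type*} [SeminormedAddCommGroup E] [InnerProductSpace ℝ E]
    {F : E →ₗ[ℝ] E} (hF : ∀ x y : E, ⟪F x, y⟫ = -⟪x, F y⟫)
    {M : ℝ} (hM : 0 ≤ M) (hFM : ∀ x : E, ‖F x‖ ≤ M * ‖x‖)
    {p s : ℕ} {β : ℕ → ℝ} (hβ : ∀ j, j ≤ 2 * p → β j = 1 / (j.factorial : ℝ))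
    (hβ' : ∀ j, s < j → β j = 0) {C δt : ℝ} (hC : 0 ≤ C) (hδt : 0 ≤ δt) (h1 : δt * M ≤ 1)
    (h2 : δt ^ (2 * p + 1) * M ^ (2 * p + 2) * ∑ q ∈ Icc (p + 1) s, |stabilityCoeff β q| ≤ 2 * C)
    (θ : E) :
    ‖∑ ℓ ∈ range (s + 1), (δt ^ ℓ * β ℓ) • (F ^ ℓ) θ‖ ≤ (1 + C * δt) * ‖θ‖ := by
  have hA (x y : E) : ⟪(δt • F) x, y⟫ = -⟪x, (δt • F) y⟫ := by
    simp [real_inner_smul_left, real_inner_smul_right, hF]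
  have hAM (x : E) : ‖(δt • F) x‖ ≤ δt * M * ‖x‖ := by
    rw [LinearMap.smul_apply, norm_smul, Real.norm_of_nonneg hδt, mul_assoc]
    gcongr
    exact hFM x
  have hS0 : stabilityCoeff β 0 = 1 := by simp [stabilityCoeff_zero, hβ]
  have hS : ∀ q, q ≠ 0 → q ≤ p → stabilityCoeff β q = 0 := fun q hq hqp ↦
    stabilityCoeff_eq_zero_of_eq_inv_factorial hq fun j hj ↦ hβ j (by lia)
  refine le_of_sq_le_sq ?_ (by positivity)
  calc ‖∑ ℓ ∈ range (s + 1), (δt ^ ℓ * β ℓ) • (F ^ ℓ) θ‖ ^ 2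
      = ‖∑ ℓ ∈ range (s + 1), β ℓ • ((δt • F) ^ ℓ) θ‖ ^ 2 := by
        simp only [smul_pow, LinearMap.smul_apply, smul_smul, mul_comm]
    _ ≤ (1 + (δt * M) ^ (2 * p + 2) * ∑ q ∈ Icc (p + 1) s, |stabilityCoeff β q|) * ‖θ‖ ^ 2 :=
        norm_sq_sum_smul_pow_apply_le hA (by positivity) h1 hAM hβ' hS0 hS θ
    _ = (1 + δt ^ (2 * p + 1) * M ^ (2 * p + 2) *
          (∑ q ∈ Icc (p + 1) s, |stabilityCoeff β q|) * δt) * ‖θ‖ ^ 2 := by ring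
    _ ≤ (1 + 2 * C * δt) * ‖θ‖ ^ 2 := by gcongr
    _ ≤ (1 + C * δt) ^ 2 * ‖θ‖ ^ 2 := by
        gcongr
        linarith [sq_nonneg (C * δt)]
    _ = ((1 + C * δt) * ‖θ‖) ^ 2 := by ring

/-- Stability of an order-`2p` scheme applied to a skew-adjoint (transport-like) operator:
if `‖F x‖ ≤ M ‖x‖`, `K = ∑_{q=p+1}^{2p} |S_q|`, and the time step satisfies
`δt·M ≤ 1` and `δt^{2p+1} M^{2p+2} ≤ 2C/K`, then the scheme
`θ ↦ ∑_{ℓ=0}^{2p} (δt^ℓ/ℓ!) F^ℓ θ` amplifies norms by at most `1 + C·δt`. -/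
theorem order_2p_scheme_stability
    {E : Type*} [NormedAddCommGroup E] [InnerProductSpace ℝ E]
    (F : E →L[ℝ] E) (hF : ∀ x y : E, ⟪F x, y⟫ = -⟪x, F y⟫)
    (M : ℝ) (hM : 0 < M) (hFM : ∀ x : E, ‖F x‖ ≤ M * ‖x‖)
    (p : ℕ) (hp : 1 ≤ p) (β : ℕ → ℝ)
    (hβ : ∀ j, j ≤ 2 * p → β j = 1 / (Nat.factorial j : ℝ))
    (hβ' : ∀ j, 2 * p < j → β j = 0)
    (S : ℕ → ℝ)
    (hS : ∀ q, S q = ∑ j ∈ range (2 * q + 1), (-1 : ℝ) ^ (q + j) * β j * β (2 * q - j))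
    (K : ℝ) (hK : K = ∑ q ∈ Icc (p + 1) (2 * p), |S q|)
    (C δt : ℝ) (hC : 0 < C) (hδt : 0 < δt)
    (h1 : δt * M ≤ 1) (h2 : δt ^ (2 * p + 1) * M ^ (2 * p + 2) ≤ 2 * C / K)
    (θ : E) :
    ‖∑ ℓ ∈ range (2 * p + 1), (δt ^ ℓ / (Nat.factorial ℓ : ℝ)) • (F ^ ℓ) θ‖ ≤
      (1 + C * δt) * ‖θ‖ := by
  obtain rfl : S = stabilityCoeff β := funext hS
  subst hK
  have hCFL := mul_le_of_le_div₀ (by positivity) (sum_nonneg fun _ _ ↦ abs_nonneg _) h2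
  have hterm : ∀ ℓ ∈ range (2 * p + 1),
      (δt ^ ℓ / (Nat.factorial ℓ : ℝ)) • (F ^ ℓ) θ = (δt ^ ℓ * β ℓ) • ((F : E →ₗ[ℝ] E) ^ ℓ) θ := by
    intro ℓ hℓ
    rw [hβ ℓ (by grind), mul_one_div, ← ContinuousLinearMap.toLinearMap_pow,
      ContinuousLinearMap.coe_coe]
  rw [sum_congr rfl hterm]
  exact order_2p_scheme_stability_general hF hM.le hFM hβ hβ' hC.le hδt.le h1 hCFL θ
end

section
/- Let E be a real inner product space and F : E → E a continuous linear map that is skew-adjoint, i.e. ⟨F x, y⟩ = -⟨x, F y⟩ for all x, y ∈ E. Then for every θ ∈ E and real t, the classical fourth-order Runge–Kutta scheme applied to the linear equation ∂_t u = F u satisfies the exact energy identity ‖θ + t F θ + (t²/2) F² θ + (t³/6) F³ θ + (t⁴/24) F⁴ θ‖² = ‖θ‖² - (t⁶/72) ‖F³ θ‖² + (t⁸/576) ‖F⁴ θ‖². -/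
open RealInnerProductSpace

/-!
If `F` is skew-adjoint, then the adjoint of `p(F)` is `p(-F)`, so `‖p(F) θ‖² = ⟪θ, p(-F) p(F) θ⟫`.
The polynomial `p(-X) p(X)` is even, hence of the form `q(-X²)`, and `⟪θ, (-F²)^ℓ θ⟫ = ‖F^ℓ θ‖²`;
so the coefficients of `q` are those of the energy identity. For the amplification factor `g` of
classical RK4, `g(-X) g(X) = 1 + X⁶/72 + X⁸/576`, that is, `q = 1 - X³/72 + X⁴/576`.
-/

open Polynomial

section SkewAdjoint

variable {R M N : Type*} [CommRing R] [AddCommGroup M] [Module R M] [AddCommGroup N] [Module R N]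
  {B : M →ₗ[R] M →ₗ[R] N} {f g : Module.End R M}

theorem isAdjointPair_pow (h : B.IsAdjointPair B f g) (n : ℕ) :
    B.IsAdjointPair B ⇑(f ^ n) ⇑(g ^ n) := by
  induction n with
  | zero => exact LinearMap.isAdjointPair_one
  | succ n ih =>
    rw [pow_succ f, pow_succ' g]
    exact ih.mul h

theorem isAdjointPair_aeval (h : B.IsAdjointPair B f g) (p : R[X]) :
    B.IsAdjointPair B (aeval f p) (aeval g p) := by
  induction p using Polynomial.induction_on' with
  | add p q hp hq =>
    rw [map_add, map_add]
    exact hp.add hq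
  | monomial n a =>
    simp only [aeval_monomial, ← Algebra.smul_def]
    exact (isAdjointPair_pow h n).smul a

theorem apply_aeval_aeval_of_isSkewAdjoint (hf : B.IsSkewAdjoint f) (p : R[X]) (x y : M) :
    B (aeval f p x) (aeval f p y) = B x (aeval f (p.comp (-X) * p) y) := by
  have adjoint_aeval : B.IsAdjointPair B (aeval f p) (aeval f (p.comp (-X))) := by
    rw [aeval_comp, map_neg, aeval_X]
    exact isAdjointPair_aeval (g := -f) hf p
  rw [adjoint_aeval, aeval_mul, Module.End.mul_apply]

theorem apply_neg_sq_pow_of_isSkewAdjoint (hf : B.IsSkewAdjoint f) (n : ℕ) (x y : M) :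
    B x (((-f ^ 2) ^ n) y) = B ((f ^ n) x) ((f ^ n) y) := by
  have neg_sq_pow : (-f ^ 2) ^ n = (-f) ^ n * f ^ n := by
    rw [← (Commute.refl f).neg_left.mul_pow, neg_mul, sq]
  rw [neg_sq_pow, Module.End.mul_apply]
  exact (isAdjointPair_pow (g := -f) hf n x ((f ^ n) y)).symm

theorem apply_aeval_aeval_eq_sum_of_isSkewAdjoint (hf : B.IsSkewAdjoint f) {p q : R[X]}
    (hpq : p.comp (-X) * p = q.comp (-X ^ 2)) {n : ℕ} (hn : q.natDegree < n) (x y : M) :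
    B (aeval f p x) (aeval f p y) =
      ∑ ℓ ∈ Finset.range n, q.coeff ℓ • B ((f ^ ℓ) x) ((f ^ ℓ) y) := by
  calc B (aeval f p x) (aeval f p y)
      = B x (aeval (-f ^ 2) q y) := by
        rw [apply_aeval_aeval_of_isSkewAdjoint hf, hpq, aeval_comp, map_neg, map_pow, aeval_X]
    _ = ∑ ℓ ∈ Finset.range n, q.coeff ℓ • B x (((-f ^ 2) ^ ℓ) y) := by
        simp only [aeval_eq_sum_range' hn, LinearMap.sum_apply, LinearMap.smul_apply, map_sum,
          map_smul]
    _ = ∑ ℓ ∈ Finset.range n, q.coeff ℓ • B ((f ^ ℓ) x) ((f ^ ℓ) y) := by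
        simp only [apply_neg_sq_pow_of_isSkewAdjoint hf]

end SkewAdjoint

section RK4

variable (K : Type*) [Field K]

/-- The amplification factor `g(ζ)` of the classical fourth-order Runge–Kutta scheme, as a
polynomial: one step of size `t` for `∂ₜ u = F u` is `g(t F)`. -/
noncomputable def rk4Amplification : K[X] :=
  1 + X + C (1 / 2) * X ^ 2 + C (1 / 6) * X ^ 3 + C (1 / 24) * X ^ 4

/-- The generating polynomial `∑ S_ℓ X ^ ℓ` of the stability coefficients of the classical
fourth-order Runge–Kutta scheme, including `S₀ = 1`: the factor by which the scheme multiplies the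
energy of a mode of frequency `ω` is its value at `ω²`, where `ω` is scaled by the step size. -/
noncomputable def rk4Stability : K[X] :=
  1 - C (1 / 72) * X ^ 3 + C (1 / 576) * X ^ 4

theorem natDegree_rk4Stability_lt : (rk4Stability K).natDegree < 5 := by
  rw [rk4Stability, Nat.lt_succ_iff]
  compute_degree

variable [CharZero K]

theorem rk4Amplification_comp_neg_X_mul_self :
    (rk4Amplification K).comp (-X) * rk4Amplification K = (rk4Stability K).comp (-X ^ 2) := by
  refine Polynomial.funext fun z ↦ ?_
  simp only [rk4Amplification, rk4Stability, eval_mul, eval_comp, eval_add, eval_sub, eval_neg,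
    eval_pow, eval_one, eval_C, eval_X]
  field_simp
  ring

variable {K} {M N : Type*} [AddCommGroup M] [Module K M] [AddCommGroup N] [Module K N]
  {B : M →ₗ[K] M →ₗ[K] N} {f : Module.End K M}

theorem apply_rk4Amplification_of_isSkewAdjoint (hf : B.IsSkewAdjoint f) (x y : M) :
    B (aeval f (rk4Amplification K) x) (aeval f (rk4Amplification K) y) =
      B x y - (1 / 72 : K) • B ((f ^ 3) x) ((f ^ 3) y)
        + (1 / 576 : K) • B ((f ^ 4) x) ((f ^ 4) y) := by
  rw [apply_aeval_aeval_eq_sum_of_isSkewAdjoint hf (rk4Amplification_comp_neg_X_mul_self K)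
    (natDegree_rk4Stability_lt K)]
  simp [Finset.sum_range_succ, rk4Stability, coeff_one, coeff_X_pow, sub_eq_add_neg]

end RK4

theorem classical_RK4_skew_adjoint_energy_general
    {E : Type*} [SeminormedAddCommGroup E] [InnerProductSpace ℝ E]
    (F : E →ₗ[ℝ] E) (hF : ∀ x y : E, ⟪F x, y⟫ = -⟪x, F y⟫)
    (θ : E) (t : ℝ) :
    ‖θ + t • F θ + (t ^ 2 / 2) • (F ^ 2) θ + (t ^ 3 / 6) • (F ^ 3) θ
        + (t ^ 4 / 24) • (F ^ 4) θ‖ ^ 2 =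
      ‖θ‖ ^ 2 - t ^ 6 / 72 * ‖(F ^ 3) θ‖ ^ 2 + t ^ 8 / 576 * ‖(F ^ 4) θ‖ ^ 2 := by
  have skew_smul : (innerₗ E).IsSkewAdjoint ⇑(t • F) := fun x y ↦ by
    simp [real_inner_smul_right, hF]
  have rk4_step : aeval (t • F) (rk4Amplification ℝ) θ =
      θ + t • F θ + (t ^ 2 / 2) • (F ^ 2) θ + (t ^ 3 / 6) • (F ^ 3) θ
        + (t ^ 4 / 24) • (F ^ 4) θ := by
    simp [rk4Amplification, ← Algebra.smul_def, _root_.smul_pow, smul_smul, div_eq_mul_inv]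
  have energy := apply_rk4Amplification_of_isSkewAdjoint skew_smul θ θ
  simp only [rk4_step, innerₗ_apply_apply, real_inner_self_eq_norm_sq, _root_.smul_pow,
    LinearMap.smul_apply, norm_smul, mul_pow, Real.norm_eq_abs, sq_abs, smul_eq_mul] at energy
  rw [energy]
  ring

/-- Classical fourth-order Runge–Kutta scheme for a skew-adjoint operator: exact energy
identity `‖θ + t F θ + (t²/2) F² θ + (t³/6) F³ θ + (t⁴/24) F⁴ θ‖² =
‖θ‖² - (t⁶/72) ‖F³ θ‖² + (t⁸/576) ‖F⁴ θ‖²`. -/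
theorem classical_RK4_skew_adjoint_energy
    {E : Type*} [NormedAddCommGroup E] [InnerProductSpace ℝ E]
    (F : E →L[ℝ] E) (hF : ∀ x y : E, ⟪F x, y⟫ = -⟪x, F y⟫)
    (θ : E) (t : ℝ) :
    ‖θ + t • F θ + (t ^ 2 / 2) • (F ^ 2) θ + (t ^ 3 / 6) • (F ^ 3) θ
        + (t ^ 4 / 24) • (F ^ 4) θ‖ ^ 2 =
      ‖θ‖ ^ 2 - t ^ 6 / 72 * ‖(F ^ 3) θ‖ ^ 2 + t ^ 8 / 576 * ‖(F ^ 4) θ‖ ^ 2 := by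
  simpa only [← ContinuousLinearMap.toLinearMap_pow, ContinuousLinearMap.coe_coe] using
    classical_RK4_skew_adjoint_energy_general (F : E →ₗ[ℝ] E) hF θ t
end
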